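/- arXiv:math/9811184 — 2 statements merged into one kernel-verified Lean document; each statement's English description precedes it below -/
import Mathlib

section
/- Let θ : ℝ² → ℝ be C¹ with θ ∈ L^∞(ℝ²) ∩ L²(ℝ²) ∩ L¹(ℝ²) and ∇θ bounded on ℝ². Then for each x ∈ ℝ² and each ε > 0 the integral ∫_{|y|>ε} y^⊥ θ(x+y)/|y|³ dy converges absolutely, the principal value u(x) := lim_{ε→0⁺} ∫_{|y|>ε} y^⊥ θ(x+y)/|y|³ dy exists, and there are constants C₁, C₂ depending only on ‖θ‖_{L^∞}, ‖θ‖_{L²} and ‖θ‖_{L¹} such that for every τ ∈ (0,1): |u(x)| ≤ C₁ τ ‖∇θ‖_{L^∞} + C₂ (1 + log(1/τ)). Here y^⊥ = (−y₂, y₁). -/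
open MeasureTheory Set Filter Topology

noncomputable section

/-- First standard basis vector of `ℝ²`. -/
def v1 : ℝ × ℝ := (1, 0)

/-- Second standard basis vector of `ℝ²`. -/
def v2 : ℝ × ℝ := (0, 1)

/-- Partial derivative of `f : ℝ² → ℝ` in the direction `v` at `x`. -/
def pd (f : ℝ × ℝ → ℝ) (v x : ℝ × ℝ) : ℝ := fderiv ℝ f x v

/-- Gradient `∇f = (∂f/∂x₁, ∂f/∂x₂)`. -/
def grad2 (f : ℝ × ℝ → ℝ) (x : ℝ × ℝ) : ℝ × ℝ := (pd f v1 x, pd f v2 x)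

/-- Euclidean norm on `ℝ²`. -/
def e2 (y : ℝ × ℝ) : ℝ := Real.sqrt (y.1 ^ 2 + y.2 ^ 2)

/-- `y^⊥ = (−y₂, y₁)`. -/
def perp (y : ℝ × ℝ) : ℝ × ℝ := (-y.2, y.1)


lemma e2_nonneg (y : ℝ × ℝ) : 0 ≤ e2 y := Real.sqrt_nonneg _

lemma e2_cont : Continuous e2 := by unfold e2; fun_prop

lemma perp_cont : Continuous perp := by unfold perp; fun_prop

lemma e2_neg (y : ℝ × ℝ) : e2 (-y) = e2 y := by simp [e2]

lemma perp_neg (y : ℝ × ℝ) : perp (-y) = -perp y := by simp [perp]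

lemma abs_fst_le (y : ℝ × ℝ) : |y.1| ≤ e2 y := by
  unfold e2; apply Real.abs_le_sqrt; nlinarith [sq_nonneg y.2]

lemma abs_snd_le (y : ℝ × ℝ) : |y.2| ≤ e2 y := by
  unfold e2; apply Real.abs_le_sqrt; nlinarith [sq_nonneg y.1]

lemma norm_le_e2 (y : ℝ × ℝ) : ‖y‖ ≤ e2 y := by
  rw [Prod.norm_def]; exact max_le (abs_fst_le y) (abs_snd_le y)

lemma perp_norm_le (y : ℝ × ℝ) : ‖perp y‖ ≤ e2 y := by
  rw [Prod.norm_def]; unfold perp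
  refine max_le ?_ (abs_fst_le y)
  simpa using abs_snd_le y

lemma e2_le (y : ℝ × ℝ) : e2 y ≤ 2 * ‖y‖ := by
  unfold e2
  have h1 : |y.1| ≤ ‖y‖ := norm_fst_le y
  have h2 : |y.2| ≤ ‖y‖ := norm_snd_le y
  have h0 := norm_nonneg y
  rw [Real.sqrt_le_left (by positivity)]
  have := sq_le_sq' (abs_le.1 h1).1 (abs_le.1 h1).2
  have := sq_le_sq' (abs_le.1 h2).1 (abs_le.1 h2).2
  nlinarith

lemma kern_norm (c : ℝ) (y : ℝ × ℝ) : ‖(c / (e2 y) ^ 3) • perp y‖ ≤ |c| / (e2 y) ^ 2 := by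
  rcases (e2_nonneg y).eq_or_lt with h | h
  · simp [← h]
  rw [norm_smul, Real.norm_eq_abs, abs_div, abs_of_pos (pow_pos h 3)]
  calc |c| / (e2 y) ^ 3 * ‖perp y‖ ≤ |c| / (e2 y) ^ 3 * e2 y := by
        gcongr; exact perp_norm_le y
    _ = _ := by field_simp

lemma lip {θ : ℝ × ℝ → ℝ} {G : ℝ} (hθ : ContDiff ℝ 1 θ) (hG : ∀ y, e2 (grad2 θ y) ≤ G)
    (x y : ℝ × ℝ) : |θ (x + y) - θ x| ≤ 2 * G * e2 y := by
  have hG0 : 0 ≤ G := (e2_nonneg _).trans (hG 0)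
  have hb : ∀ z, ‖fderiv ℝ θ z‖ ≤ 2 * G := by
    intro z
    refine ContinuousLinearMap.opNorm_le_bound _ (by positivity) fun v => ?_
    have hv : v = v.1 • v1 + v.2 • v2 := by ext <;> simp [v1, v2]
    have h1 : |fderiv ℝ θ z v1| ≤ G := (abs_fst_le (grad2 θ z)).trans (hG z)
    have h2 : |fderiv ℝ θ z v2| ≤ G := (abs_snd_le (grad2 θ z)).trans (hG z)
    have h3 : |v.1| ≤ ‖v‖ := norm_fst_le v
    have h4 : |v.2| ≤ ‖v‖ := norm_snd_le v
    have he : fderiv ℝ θ z v = v.1 * fderiv ℝ θ z v1 + v.2 * fderiv ℝ θ z v2 := by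
      conv_lhs => rw [hv]
      simp
    rw [he, Real.norm_eq_abs]
    calc _ ≤ |v.1| * |fderiv ℝ θ z v1| + |v.2| * |fderiv ℝ θ z v2| := by
          rw [← abs_mul, ← abs_mul]; exact abs_add_le _ _
      _ ≤ ‖v‖ * G + ‖v‖ * G := by gcongr
      _ = _ := by ring
  have := Convex.norm_image_sub_le_of_norm_fderiv_le (𝕜 := ℝ) (s := univ) (f := θ) (C := 2 * G)
    (fun z _ => (hθ.differentiable one_ne_zero) z) (fun z _ => hb z) convex_univ
    (mem_univ x) (mem_univ (x + y))
  rw [Real.norm_eq_abs, add_sub_cancel_left] at this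
  refine this.trans ?_
  gcongr
  exact norm_le_e2 y

lemma lint_polar (h : ℝ → ENNReal) (hh : Measurable h) :
    ∫⁻ y, h (e2 y) = ENNReal.ofReal (2 * Real.pi) * ∫⁻ r in Ioi (0:ℝ), ENNReal.ofReal r * h r := by
  rw [← lintegral_comp_polarCoord_symm, polarCoord_target]
  have : ∀ p ∈ (Ioi (0:ℝ) ×ˢ Ioo (-Real.pi) Real.pi),
      ENNReal.ofReal p.1 • h (e2 (polarCoord.symm p)) = ENNReal.ofReal p.1 * h p.1 := by
    rintro ⟨r, t⟩ ⟨hr, -⟩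
    have : e2 (polarCoord.symm (r, t)) = r := by
      simp only [e2, polarCoord_symm_apply]
      rw [show (r * Real.cos t) ^ 2 + (r * Real.sin t) ^ 2 = r ^ 2 by
        nlinarith [Real.sin_sq_add_cos_sq t]]
      exact Real.sqrt_sq (le_of_lt hr)
    rw [this, smul_eq_mul]
  rw [setLIntegral_congr_fun (measurableSet_Ioi.prod measurableSet_Ioo) this,
    Measure.volume_eq_prod, ← Measure.prod_restrict]
  rw [lintegral_prod _ (by fun_prop)]
  simp only [lintegral_const, Measure.restrict_apply MeasurableSet.univ, univ_inter,
    Real.volume_Ioo]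
  rw [lintegral_mul_const _ (by fun_prop), mul_comm]
  congr 2; ring

def s1 (τ : ℝ) : Set (ℝ × ℝ) := {y | 0 < e2 y ∧ e2 y ≤ τ}
def s2 (τ : ℝ) : Set (ℝ × ℝ) := {y | τ < e2 y ∧ e2 y ≤ 1}

lemma s1_meas (τ : ℝ) : MeasurableSet (s1 τ) :=
  (measurableSet_lt measurable_const e2_cont.measurable).inter
    (measurableSet_le e2_cont.measurable measurable_const)
lemma s2_meas (τ : ℝ) : MeasurableSet (s2 τ) :=
  (measurableSet_lt measurable_const e2_cont.measurable).inter
    (measurableSet_le e2_cont.measurable measurable_const)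

lemma lint1 (τ : ℝ) (hτ : 0 < τ) :
    ∫⁻ y in s1 τ, ENNReal.ofReal (1 / e2 y) = ENNReal.ofReal (2 * Real.pi * τ) := by
  have h1 : ∫⁻ y in s1 τ, ENNReal.ofReal (1 / e2 y)
      = ∫⁻ y, (Ioc 0 τ).indicator (fun r => ENNReal.ofReal (1 / r)) (e2 y) := by
    rw [← lintegral_indicator (s1_meas τ)]
    rfl
  rw [h1, lint_polar _ (Measurable.indicator (by fun_prop) measurableSet_Ioc)]
  have h2 : ∫⁻ r in Ioi (0:ℝ), ENNReal.ofReal r *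
      (Ioc 0 τ).indicator (fun r => ENNReal.ofReal (1 / r)) r = ∫⁻ r in Ioc 0 τ, 1 := by
    rw [← lintegral_indicator measurableSet_Ioi, ← lintegral_indicator measurableSet_Ioc]
    congr 1; ext r
    by_cases hr : r ∈ Ioc 0 τ
    · rw [indicator_of_mem (show r ∈ Ioi (0:ℝ) from hr.1), indicator_of_mem hr,
        indicator_of_mem hr, ← ENNReal.ofReal_mul hr.1.le, mul_one_div_cancel hr.1.ne']
      simp
    · simp [indicator_of_notMem hr]
  rw [h2, lintegral_one, Measure.restrict_apply MeasurableSet.univ, univ_inter, Real.volume_Ioc,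
    sub_zero, ← ENNReal.ofReal_mul (by positivity)]

lemma lint2 (τ : ℝ) (hτ : 0 < τ) (hτ1 : τ < 1) :
    ∫⁻ y in s2 τ, ENNReal.ofReal (1 / (e2 y) ^ 2)
      = ENNReal.ofReal (2 * Real.pi * Real.log (1 / τ)) := by
  have h1 : ∫⁻ y in s2 τ, ENNReal.ofReal (1 / (e2 y) ^ 2)
      = ∫⁻ y, (Ioc τ 1).indicator (fun r => ENNReal.ofReal (1 / r ^ 2)) (e2 y) := by
    rw [← lintegral_indicator (s2_meas τ)]
    rfl
  rw [h1, lint_polar _ (Measurable.indicator (by fun_prop) measurableSet_Ioc)]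
  have h2 : ∫⁻ r in Ioi (0:ℝ), ENNReal.ofReal r *
      (Ioc τ 1).indicator (fun r => ENNReal.ofReal (1 / r ^ 2)) r
        = ∫⁻ r in Ioc τ 1, ENNReal.ofReal (1 / r) := by
    rw [← lintegral_indicator measurableSet_Ioi, ← lintegral_indicator measurableSet_Ioc]
    congr 1; ext r
    by_cases hr : r ∈ Ioc τ 1
    · have h0 : 0 < r := hτ.trans hr.1
      rw [indicator_of_mem (show r ∈ Ioi (0:ℝ) from h0), indicator_of_mem hr,
        indicator_of_mem hr, ← ENNReal.ofReal_mul h0.le]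
      congr 1; field_simp
    · simp [indicator_of_notMem hr]
  have h3 : IntervalIntegrable (fun r : ℝ => 1 / r) volume τ 1 := by
    apply intervalIntegral.intervalIntegrable_one_div
    · intro r hr
      rw [uIcc_of_le hτ1.le] at hr
      exact (hτ.trans_le hr.1).ne'
    · exact continuousOn_id
  rw [h2, ← ofReal_integral_eq_lintegral_ofReal ((intervalIntegrable_iff_integrableOn_Ioc_of_le
    hτ1.le).1 h3), ← intervalIntegral.integral_of_le hτ1.le, integral_one_div_of_pos hτ one_pos,
    ← ENNReal.ofReal_mul (by positivity)]
  filter_upwards [ae_restrict_mem measurableSet_Ioc] with r hr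
  exact (one_div_pos.2 (hτ.trans hr.1)).le

lemma int1 (τ : ℝ) (hτ : 0 < τ) : IntegrableOn (fun y => 1 / e2 y) (s1 τ) ∧
    ∫ y in s1 τ, 1 / e2 y = 2 * Real.pi * τ := by
  have hm : Measurable (fun y => 1 / e2 y) := measurable_const.div e2_cont.measurable
  have h0 : ∀ y, 0 ≤ 1 / e2 y := fun y => one_div_nonneg.2 (e2_nonneg y)
  constructor
  · refine ⟨hm.aestronglyMeasurable, ?_⟩
    rw [hasFiniteIntegral_iff_ofReal (ae_of_all _ h0), lint1 τ hτ]
    exact ENNReal.ofReal_lt_top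
  · rw [integral_eq_lintegral_of_nonneg_ae (ae_of_all _ h0) hm.aestronglyMeasurable, lint1 τ hτ,
      ENNReal.toReal_ofReal (by positivity)]

lemma int2 (τ : ℝ) (hτ : 0 < τ) (hτ1 : τ < 1) :
    IntegrableOn (fun y => 1 / (e2 y) ^ 2) (s2 τ) ∧
    ∫ y in s2 τ, 1 / (e2 y) ^ 2 = 2 * Real.pi * Real.log (1 / τ) := by
  have hm : Measurable (fun y => 1 / (e2 y) ^ 2) :=
    measurable_const.div (e2_cont.measurable.pow_const 2)
  have h0 : ∀ y, 0 ≤ 1 / (e2 y) ^ 2 := fun y => by positivity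
  have hl : 0 ≤ Real.log (1 / τ) := Real.log_nonneg (one_le_one_div hτ hτ1.le)
  constructor
  · refine ⟨hm.aestronglyMeasurable, ?_⟩
    rw [hasFiniteIntegral_iff_ofReal (ae_of_all _ h0), lint2 τ hτ hτ1]
    exact ENNReal.ofReal_lt_top
  · rw [integral_eq_lintegral_of_nonneg_ae (ae_of_all _ h0) hm.aestronglyMeasurable,
      lint2 τ hτ hτ1, ENNReal.toReal_ofReal (by positivity)]

lemma kern_meas {φ : ℝ × ℝ → ℝ} (h : Continuous φ) :
    Measurable (fun y => (φ y / (e2 y) ^ 3) • perp y) :=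
  (h.measurable.div (e2_cont.measurable.pow_const 3)).smul perp_cont.measurable

lemma meas_gt (ε : ℝ) : MeasurableSet {y : ℝ × ℝ | ε < e2 y} :=
  measurableSet_lt measurable_const e2_cont.measurable

lemma f_int {θ : ℝ × ℝ → ℝ} (hc : Continuous θ) (hi : Integrable θ) (x : ℝ × ℝ) {ε : ℝ}
    (hε : 0 < ε) :
    IntegrableOn (fun y => (θ (x + y) / (e2 y) ^ 3) • perp y) {y : ℝ × ℝ | ε < e2 y} := by
  have h1 : Integrable (fun y => |θ (x + y)| / ε ^ 2) :=
    ((hi.comp_add_left x).abs).div_const _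
  refine Integrable.mono' h1.integrableOn
    (kern_meas (φ := fun y => θ (x + y)) (by fun_prop)).aestronglyMeasurable ?_
  filter_upwards [ae_restrict_mem (meas_gt ε)] with y hy
  refine (kern_norm _ y).trans ?_
  have : ε < e2 y := hy
  gcongr

lemma f_bound {θ : ℝ × ℝ → ℝ} {A : ℝ} (hA : ∀ y, |θ y| ≤ A) (hi : Integrable θ)
    (x : ℝ × ℝ) {τ : ℝ} (hτ : 0 < τ) (hτ1 : τ < 1) :
    ‖∫ y in {y : ℝ × ℝ | τ < e2 y}, (θ (x + y) / (e2 y) ^ 3) • perp y‖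
      ≤ (∫ y, |θ y|) + A * (2 * Real.pi * Real.log (1 / τ)) := by
  obtain ⟨hi2, he2⟩ := int2 τ hτ hτ1
  have hA0 : 0 ≤ A := (abs_nonneg _).trans (hA 0)
  have hi1 : Integrable (fun y => |θ (x + y)|) := (hi.comp_add_left x).abs
  have hi3 : Integrable (fun y => A * (s2 τ).indicator (fun y => 1 / (e2 y) ^ 2) y) :=
    (hi2.integrable_indicator (s2_meas τ)).const_mul A
  have hn : ∀ y, 0 ≤ |θ (x + y)| + A * (s2 τ).indicator (fun y => 1 / (e2 y) ^ 2) y := by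
    intro y
    have : 0 ≤ (s2 τ).indicator (fun y => 1 / (e2 y) ^ 2) y :=
      indicator_nonneg (fun y _ => by positivity) y
    positivity
  calc _ ≤ ∫ y in {y : ℝ × ℝ | τ < e2 y},
        (|θ (x + y)| + A * (s2 τ).indicator (fun y => 1 / (e2 y) ^ 2) y) := by
        refine norm_integral_le_of_norm_le (hi1.add hi3).integrableOn ?_
        filter_upwards [ae_restrict_mem (meas_gt τ)] with y hy
        have hy : τ < e2 y := hy
        refine (kern_norm _ y).trans ?_
        by_cases h : e2 y ≤ 1
        · rw [indicator_of_mem (show y ∈ s2 τ from ⟨hy, h⟩)]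
          have : |θ (x + y)| / e2 y ^ 2 ≤ A * (1 / e2 y ^ 2) := by
            rw [mul_one_div]; gcongr; exact hA _
          linarith [abs_nonneg (θ (x + y))]
        · rw [indicator_of_notMem (fun hh => h hh.2), mul_zero, add_zero]
          exact div_le_self (abs_nonneg _) (one_le_pow₀ (not_le.1 h).le)
    _ ≤ ∫ y, (|θ (x + y)| + A * (s2 τ).indicator (fun y => 1 / (e2 y) ^ 2) y) :=
        setIntegral_le_integral (hi1.add hi3) (ae_of_all _ hn)
    _ = _ := by
        rw [integral_add hi1 hi3, integral_const_mul, integral_indicator (s2_meas τ), he2,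
          integral_add_left_eq_self (fun y => |θ y|) x]

lemma g_norm {θ : ℝ × ℝ → ℝ} {G : ℝ} (hθ : ContDiff ℝ 1 θ) (hG : ∀ y, e2 (grad2 θ y) ≤ G)
    (x y : ℝ × ℝ) : ‖((θ (x + y) - θ x) / (e2 y) ^ 3) • perp y‖ ≤ 2 * G * (1 / e2 y) := by
  refine (kern_norm _ y).trans ?_
  rcases (e2_nonneg y).eq_or_lt with h | h
  · simp [← h]
  calc _ ≤ 2 * G * e2 y / (e2 y) ^ 2 := by gcongr; exact lip hθ hG x y
    _ = _ := by field_simp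

lemma odd_zero (ε τ c : ℝ) :
    ∫ y in {y : ℝ × ℝ | ε < e2 y ∧ e2 y ≤ τ}, (c / (e2 y) ^ 3) • perp y = 0 := by
  have hm : MeasurableSet {y : ℝ × ℝ | ε < e2 y ∧ e2 y ≤ τ} :=
    (meas_gt ε).inter (measurableSet_le e2_cont.measurable measurable_const)
  rw [← integral_indicator hm]
  set F := {y : ℝ × ℝ | ε < e2 y ∧ e2 y ≤ τ}.indicator (fun y => (c / (e2 y) ^ 3) • perp y)
    with hF
  have h1 : ∀ y, F (-y) = - F y := by
    intro y
    simp only [hF, indicator, mem_setOf_eq, e2_neg, perp_neg, smul_neg]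
    split_ifs <;> simp
  have h2 : ∫ y, F (-y) = ∫ y, F y := integral_neg_eq_self F volume
  simp only [h1, integral_neg] at h2
  exact self_eq_neg.1 h2.symm

lemma main_lim {θ : ℝ × ℝ → ℝ} {G : ℝ} (hθ : ContDiff ℝ 1 θ) (hi : Integrable θ)
    (hG : ∀ y, e2 (grad2 θ y) ≤ G) (x : ℝ × ℝ) {τ : ℝ} (hτ : 0 < τ) :
    Tendsto (fun ε : ℝ => ∫ y in {y : ℝ × ℝ | ε < e2 y}, (θ (x + y) / (e2 y) ^ 3) • perp y)
      (𝓝[>] 0) (𝓝 ((∫ y in s1 τ, ((θ (x + y) - θ x) / (e2 y) ^ 3) • perp y)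
        + ∫ y in {y : ℝ × ℝ | τ < e2 y}, (θ (x + y) / (e2 y) ^ 3) • perp y)) := by
  have hc := hθ.continuous
  have hgm : Measurable (fun y => ((θ (x + y) - θ x) / (e2 y) ^ 3) • perp y) :=
    kern_meas (φ := fun y => θ (x + y) - θ x) (by fun_prop)
  have hgi : IntegrableOn (fun y => ((θ (x + y) - θ x) / (e2 y) ^ 3) • perp y) (s1 τ) :=
    Integrable.mono' ((int1 τ hτ).1.const_mul (2 * G)) hgm.aestronglyMeasurable
      (ae_of_all _ (g_norm hθ hG x))
  have hs : ∀ ε : ℝ, MeasurableSet {y : ℝ × ℝ | ε < e2 y ∧ e2 y ≤ τ} := fun ε =>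
    (meas_gt ε).inter (measurableSet_le e2_cont.measurable measurable_const)
  have key : Tendsto (fun ε : ℝ => ∫ y in {y : ℝ × ℝ | ε < e2 y ∧ e2 y ≤ τ},
      ((θ (x + y) - θ x) / (e2 y) ^ 3) • perp y) (𝓝[>] 0)
      (𝓝 (∫ y in s1 τ, ((θ (x + y) - θ x) / (e2 y) ^ 3) • perp y)) := by
    simp only [← integral_indicator (hs _), ← integral_indicator (s1_meas τ)]
    refine tendsto_integral_filter_of_dominated_convergence
      ((s1 τ).indicator fun y => ‖((θ (x + y) - θ x) / (e2 y) ^ 3) • perp y‖) ?_ ?_ ?_ ?_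
    · exact Eventually.of_forall fun ε => (hgm.indicator (hs ε)).aestronglyMeasurable
    · filter_upwards [self_mem_nhdsWithin] with ε hε
      refine ae_of_all _ fun y => ?_
      rw [norm_indicator_eq_indicator_norm]
      have hsub : {y : ℝ × ℝ | ε < e2 y ∧ e2 y ≤ τ} ⊆ s1 τ :=
        fun y hy => ⟨lt_trans hε hy.1, hy.2⟩
      exact indicator_le_indicator_of_subset hsub (fun _ => norm_nonneg _) y
    · exact IntegrableOn.integrable_indicator (Integrable.norm hgi) (s1_meas τ)
    · refine ae_of_all _ fun y => ?_
      refine tendsto_const_nhds.congr' ?_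
      rcases (e2_nonneg y).eq_or_lt with h | h
      · filter_upwards [self_mem_nhdsWithin] with ε hε
        have hε : 0 < ε := hε
        rw [indicator_of_notMem, indicator_of_notMem]
        · exact fun hh => by have := hh.1; linarith
        · exact fun hh => by have := hh.1; linarith
      · filter_upwards [Ioo_mem_nhdsGT h] with ε hε
        simp only [indicator, s1, mem_setOf_eq, h, hε.2, true_and]
  refine (key.add_const _).congr' ?_
  filter_upwards [Ioo_mem_nhdsGT hτ] with ε hε
  have hfi := f_int hc hi x hε.1
  have hfi1 : IntegrableOn (fun y => (θ (x + y) / (e2 y) ^ 3) • perp y)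
      {y : ℝ × ℝ | ε < e2 y ∧ e2 y ≤ τ} := hfi.mono_set fun y hy => hy.1
  have hgi1 : IntegrableOn (fun y => ((θ (x + y) - θ x) / (e2 y) ^ 3) • perp y)
      {y : ℝ × ℝ | ε < e2 y ∧ e2 y ≤ τ} := hgi.mono_set fun y hy => ⟨hε.1.trans hy.1, hy.2⟩
  have hu : {y : ℝ × ℝ | ε < e2 y} = {y : ℝ × ℝ | ε < e2 y ∧ e2 y ≤ τ} ∪ {y | τ < e2 y} := by
    ext y
    simp only [mem_setOf_eq, mem_union]
    constructor
    · intro h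
      rcases le_or_gt (e2 y) τ with h' | h'
      · exact Or.inl ⟨h, h'⟩
      · exact Or.inr h'
    · rintro (h | h)
      · exact h.1
      · exact hε.2.trans h
  have hd : Disjoint {y : ℝ × ℝ | ε < e2 y ∧ e2 y ≤ τ} {y | τ < e2 y} :=
    Set.disjoint_left.2 fun y h h' => not_lt.2 h.2 h'
  rw [hu, setIntegral_union hd (meas_gt τ) hfi1 (f_int hc hi x hτ)]
  congr 1
  have hz : ∀ y, (θ (x + y) / (e2 y) ^ 3) • perp y - ((θ (x + y) - θ x) / (e2 y) ^ 3) • perp y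
      = (θ x / (e2 y) ^ 3) • perp y := by
    intro y; rw [← sub_smul]; congr 1; ring
  have := integral_sub hfi1 hgi1
  simp only [hz] at this
  rw [odd_zero] at this
  exact (sub_eq_zero.1 this.symm).symm

/-- **Velocity estimate for QG.** For `θ : ℝ² → ℝ` of class `C¹`, in
`L^∞ ∩ L² ∩ L¹` with norms bounded by `A`, `B`, `D`, and with `|∇θ| ≤ G`, the principal
value `u(x) = P.V.∫ y^⊥ θ(x+y)/|y|³ dy` exists at every `x`: each truncated integral
converges absolutely, the limit as `ε → 0⁺` exists, and for constants `C₁, C₂` depending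
only on `A, B, D`, one has `|u(x)| ≤ C₁ τ G + C₂ (1 + log(1/τ))` for every `τ ∈ (0,1)`. -/
theorem velocity_principal_value (A B D : ℝ) :
    ∃ C₁ C₂ : ℝ, 0 < C₁ ∧ 0 < C₂ ∧
      ∀ θ : ℝ × ℝ → ℝ, ∀ G : ℝ,
        ContDiff ℝ 1 θ →
        (∀ y, |θ y| ≤ A) →
        Integrable (fun y => (θ y) ^ 2) →
        Real.sqrt (∫ y, (θ y) ^ 2) ≤ B →
        Integrable θ →
        (∫ y, |θ y|) ≤ D →
        (∀ y, e2 (grad2 θ y) ≤ G) →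
        ∀ x : ℝ × ℝ,
          (∀ ε : ℝ, 0 < ε →
            IntegrableOn (fun y => (θ (x + y) / (e2 y) ^ 3) • perp y) {y : ℝ × ℝ | ε < e2 y}) ∧
          ∃ L : ℝ × ℝ,
            Tendsto (fun ε : ℝ =>
                ∫ y in {y : ℝ × ℝ | ε < e2 y}, (θ (x + y) / (e2 y) ^ 3) • perp y)
              (𝓝[>] 0) (𝓝 L) ∧
            ∀ τ : ℝ, 0 < τ → τ < 1 →
              e2 L ≤ C₁ * τ * G + C₂ * (1 + Real.log (1 / τ)) := by
  refine ⟨8 * Real.pi, 2 * (|D| + 2 * Real.pi * |A| + 1), by positivity, by positivity, ?_⟩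
  intro θ G hθ hA _ _ hi hD hG x
  refine ⟨fun ε hε => f_int hθ.continuous hi x hε, _, main_lim hθ hi hG x one_half_pos, ?_⟩
  intro τ hτ hτ1
  rw [tendsto_nhds_unique (main_lim hθ hi hG x one_half_pos) (main_lim hθ hi hG x hτ)]
  refine (e2_le _).trans ?_
  have hl : 0 ≤ Real.log (1 / τ) := Real.log_nonneg (one_le_one_div hτ hτ1.le)
  have h1 := f_bound hA hi x hτ hτ1
  have h2 : ‖∫ y in s1 τ, ((θ (x + y) - θ x) / (e2 y) ^ 3) • perp y‖
      ≤ 2 * G * (2 * Real.pi * τ) := by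
    rw [← (int1 τ hτ).2, ← integral_const_mul]
    exact norm_integral_le_of_norm_le ((int1 τ hτ).1.const_mul (2 * G))
      (ae_of_all _ (g_norm hθ hG x))
  have h3 := norm_add_le (∫ y in s1 τ, ((θ (x + y) - θ x) / (e2 y) ^ 3) • perp y)
    (∫ y in {y : ℝ × ℝ | τ < e2 y}, (θ (x + y) / (e2 y) ^ 3) • perp y)
  have h4 : A * (2 * Real.pi * Real.log (1 / τ)) ≤ |A| * (2 * Real.pi * Real.log (1 / τ)) := by
    gcongr; exact le_abs_self A
  have h5 : 0 ≤ |D| * Real.log (1 / τ) := by positivity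
  have h6 : 0 ≤ 2 * Real.pi * |A| := by positivity
  have h7 := le_abs_self D
  nlinarith

end
end

section
/- Let ω : ℝ² → ℝ be measurable with ω ∈ L¹(ℝ²) ∩ L^∞(ℝ²). Let p, q ∈ ℝ² with 0 < |p − q| ≤ 1. Then the function y ↦ ω(y)(log|y − p| − log|y − q|) is absolutely integrable on ℝ², and |∫_{ℝ²} ω(y)(log|y − p| − log|y − q|) dy| ≤ K |p − q|, where K depends only on ‖ω‖_{L¹} and ‖ω‖_{L^∞}. -/
open MeasureTheory Set

noncomputable section

def kk1 (t : ℝ) : ℝ := (Ioc (0:ℝ) 1).indicator (fun t => t ^ (-(1/2) : ℝ)) t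

def kk (t : ℝ) : ℝ := kk1 t + kk1 (-t)

def gg (y : ℝ × ℝ) : ℝ := kk y.1 * kk y.2

lemma kk1_integrable : Integrable kk1 := by
  have h := intervalIntegral.intervalIntegrable_rpow' (a := 0) (b := 1) (r := -(1/2)) (by norm_num)
  rw [intervalIntegrable_iff_integrableOn_Ioc_of_le (by norm_num)] at h
  exact (integrable_indicator_iff measurableSet_Ioc).2 h

lemma kk1_nonneg (t : ℝ) : 0 ≤ kk1 t := by
  unfold kk1
  apply indicator_nonneg
  intro x hx
  exact Real.rpow_nonneg hx.1.le _

lemma kk_nonneg (t : ℝ) : 0 ≤ kk t := add_nonneg (kk1_nonneg _) (kk1_nonneg _)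

lemma kk_integrable : Integrable kk := kk1_integrable.add kk1_integrable.comp_neg

lemma gg_integrable : Integrable gg := kk_integrable.mul_prod kk_integrable

lemma gg_nonneg (y) : 0 ≤ gg y := mul_nonneg (kk_nonneg _) (kk_nonneg _)

lemma le_kk (t : ℝ) (h0 : t ≠ 0) (h1 : |t| ≤ 1) : (Real.sqrt |t|)⁻¹ ≤ kk t := by
  have key : ∀ s : ℝ, 0 < s → s ≤ 1 → (Real.sqrt s)⁻¹ = kk1 s := by
    intro s h h'
    unfold kk1
    rw [indicator_of_mem (show s ∈ Ioc (0:ℝ) 1 from ⟨h, h'⟩), Real.rpow_neg h.le, Real.sqrt_eq_rpow]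
  unfold kk
  rcases lt_or_gt_of_ne h0 with h | h
  · rw [abs_of_neg h] at *
    rw [key _ (by linarith) h1]
    linarith [kk1_nonneg t]
  · rw [abs_of_pos h] at *
    rw [key _ h h1]
    linarith [kk1_nonneg (-t)]

lemma e2_eq (y : ℝ × ℝ) : e2 y = ‖(⟨y.1, y.2⟩ : ℂ)‖ := by
  rw [Complex.norm_def, Complex.normSq_apply, e2]; congr 1; ring

lemma e2_inv_le (y : ℝ × ℝ) (h1 : y.1 ≠ 0) (h2 : y.2 ≠ 0) : (e2 y)⁻¹ ≤ gg y + 1 := by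
  by_cases h : 1 ≤ e2 y
  · linarith [inv_le_one_of_one_le₀ h, gg_nonneg y]
  · push Not at h
    have a1 : |y.1| ≤ e2 y := Real.abs_le_sqrt (by nlinarith [sq_nonneg y.2])
    have a2 : |y.2| ≤ e2 y := Real.abs_le_sqrt (by nlinarith [sq_nonneg y.1])
    have b1 := le_kk y.1 h1 (by linarith)
    have b2 := le_kk y.2 h2 (by linarith)
    have p1 : 0 < |y.1| := abs_pos.2 h1
    have p2 : 0 < |y.2| := abs_pos.2 h2
    have c : Real.sqrt |y.1| * Real.sqrt |y.2| ≤ e2 y := by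
      rw [← Real.sqrt_mul p1.le]
      apply Real.sqrt_le_iff.2 ⟨by linarith, ?_⟩
      nlinarith
    have d : (e2 y)⁻¹ ≤ (Real.sqrt |y.1| * Real.sqrt |y.2|)⁻¹ :=
      inv_anti₀ (by positivity) c
    rw [mul_inv] at d
    have e : (Real.sqrt |y.1|)⁻¹ * (Real.sqrt |y.2|)⁻¹ ≤ gg y :=
      mul_le_mul b1 b2 (by positivity) (kk_nonneg _)
    linarith

lemma log_sub_le (a b : ℝ) (ha : 0 < a) (hb : 0 < b) :
    |Real.log a - Real.log b| ≤ |a - b| * (a⁻¹ + b⁻¹) := by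
  have key : ∀ a b : ℝ, 0 < a → 0 < b →
      Real.log a - Real.log b ≤ |a - b| * b⁻¹ := by
    intro a b ha hb
    rw [← Real.log_div ha.ne' hb.ne']
    have h := Real.log_le_sub_one_of_pos (div_pos ha hb)
    have e : a / b - 1 = (a - b) * b⁻¹ := by field_simp
    have := mul_le_mul_of_nonneg_right (le_abs_self (a - b)) (inv_pos.2 hb).le
    linarith
  have h1 := key a b ha hb
  have h2 := key b a hb ha
  rw [abs_sub_comm b a] at h2
  have := mul_nonneg (abs_nonneg (a - b)) (inv_pos.2 ha).le
  have := mul_nonneg (abs_nonneg (a - b)) (inv_pos.2 hb).le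
  rw [abs_le]
  constructor <;> nlinarith

lemma e2_diff (y p q : ℝ × ℝ) : |e2 (y - p) - e2 (y - q)| ≤ e2 (p - q) := by
  have h := abs_norm_sub_norm_le (⟨(y-p).1, (y-p).2⟩ : ℂ) ⟨(y-q).1, (y-q).2⟩
  rw [e2_eq, e2_eq, e2_eq]
  refine h.trans (le_of_eq ?_)
  rw [← norm_neg]
  congr 1
  apply Complex.ext <;> simp

lemma ae_ne (p : ℝ × ℝ) : ∀ᵐ y : ℝ × ℝ, (y - p).1 ≠ 0 ∧ (y - p).2 ≠ 0 := by
  have h0 : ∀ c : ℝ, ∀ᵐ t : ℝ, t ≠ c := fun c => by simp [ae_iff]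
  have h1 := (Measure.quasiMeasurePreserving_fst (μ := (volume : Measure ℝ)) (ν := (volume : Measure ℝ))).ae (h0 p.1)
  have h2 := (Measure.quasiMeasurePreserving_snd (μ := (volume : Measure ℝ)) (ν := (volume : Measure ℝ))).ae (h0 p.2)
  rw [Measure.volume_eq_prod]
  filter_upwards [h1, h2] with y a b
  exact ⟨sub_ne_zero.2 a, sub_ne_zero.2 b⟩

lemma e2_pos (y : ℝ × ℝ) (h : y.1 ≠ 0) : 0 < e2 y := Real.sqrt_pos.2 (by positivity)

lemma e2_meas : Measurable e2 := by unfold e2; fun_prop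

/-- **Euler analogue of Lemma 1.** Let `ω : ℝ² → ℝ` be measurable and in `L¹ ∩ L^∞`,
with `‖ω‖_{L¹} ≤ A` and `‖ω‖_∞ ≤ B`. Then there is a constant `K` depending only on `A`
and `B` such that for all `p, q ∈ ℝ²` with `0 < |p − q| ≤ 1`, the function
`y ↦ ω(y)(log|y−p| − log|y−q|)` is absolutely integrable and
`|∫ ω(y)(log|y−p| − log|y−q|) dy| ≤ K |p − q|`. -/
theorem log_stream_function_difference_bound (A B : ℝ) :
    ∃ K : ℝ, 0 < K ∧
      ∀ ω : ℝ × ℝ → ℝ, Measurable ω →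
        Integrable ω →
        (∫ y, |ω y|) ≤ A →
        (∀ y, |ω y| ≤ B) →
        ∀ p q : ℝ × ℝ, 0 < e2 (p - q) → e2 (p - q) ≤ 1 →
          Integrable (fun y => ω y * (Real.log (e2 (y - p)) - Real.log (e2 (y - q)))) ∧
          |∫ y, ω y * (Real.log (e2 (y - p)) - Real.log (e2 (y - q)))| ≤
            K * e2 (p - q) := by
  have hG : 0 ≤ ∫ y, gg y := integral_nonneg gg_nonneg
  refine ⟨2 * (|B| * ∫ y, gg y) + 2 * |A| + 1, by positivity, ?_⟩
  intro ω hm hi hA hB p q hpos _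
  set d := e2 (p - q) with hd
  have hae : ∀ᵐ y : ℝ × ℝ, ‖ω y * (Real.log (e2 (y - p)) - Real.log (e2 (y - q)))‖ ≤
      d * (|B| * gg (y - p) + |B| * gg (y - q) + 2 * |ω y|) := by
    filter_upwards [ae_ne p, ae_ne q] with y hp hq
    have l := log_sub_le _ _ (e2_pos _ hp.1) (e2_pos _ hq.1)
    have i1 := e2_inv_le _ hp.1 hp.2
    have i2 := e2_inv_le _ hq.1 hq.2
    have g1 := gg_nonneg (y - p)
    have g2 := gg_nonneg (y - q)
    have pp := e2_pos _ hp.1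
    have pq := e2_pos _ hq.1
    have l2 : |Real.log (e2 (y - p)) - Real.log (e2 (y - q))| ≤
        d * (gg (y - p) + gg (y - q) + 2) :=
      l.trans (mul_le_mul (e2_diff y p q) (by linarith) (by positivity) hpos.le)
    have hB' : |ω y| ≤ |B| := (hB y).trans (le_abs_self B)
    rw [Real.norm_eq_abs, abs_mul]
    calc _ ≤ |ω y| * (d * (gg (y - p) + gg (y - q) + 2)) :=
          mul_le_mul_of_nonneg_left l2 (abs_nonneg _)
      _ = d * (|ω y| * gg (y - p) + |ω y| * gg (y - q) + 2 * |ω y|) := by ring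
      _ ≤ _ := by gcongr
  have ip : Integrable (fun y => |B| * gg (y - p)) := (gg_integrable.comp_sub_right p).const_mul _
  have iq : Integrable (fun y => |B| * gg (y - q)) := (gg_integrable.comp_sub_right q).const_mul _
  have io : Integrable (fun y => 2 * |ω y|) := hi.abs.const_mul _
  have ipq : Integrable (fun y => |B| * gg (y - p) + |B| * gg (y - q)) := ip.add iq
  have itot : Integrable (fun y => d * (|B| * gg (y - p) + |B| * gg (y - q) + 2 * |ω y|)) :=
    (ipq.add io).const_mul d
  have hmeas : Measurable (fun y => ω y * (Real.log (e2 (y - p)) - Real.log (e2 (y - q)))) := by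
    have := e2_meas
    fun_prop
  refine ⟨itot.mono' hmeas.aestronglyMeasurable hae, ?_⟩
  have h := norm_integral_le_of_norm_le itot hae
  rw [Real.norm_eq_abs] at h
  refine h.trans ?_
  rw [integral_const_mul, integral_add ipq io, integral_add ip iq, integral_const_mul,
    integral_const_mul, integral_const_mul, integral_sub_right_eq_self gg p,
    integral_sub_right_eq_self gg q, mul_comm]
  refine mul_le_mul_of_nonneg_right ?_ hpos.le
  linarith [le_abs_self A]

end
end
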